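/- arXiv:2209.03017 — 2 statements merged into one kernel-verified Lean document; each statement's English description precedes it below -/
import Mathlib

section
/- Fix τ₀ ∈ (0,1) and η > 0, and set τ_{ℓ'} = τ₀·2^{-η ℓ'} for ℓ' ∈ ℕ. For h ∈ (0, τ₀] let L̂ = ⌊log₂((h/τ₀)^{-1})/η⌋, and define the work of the branching estimator by W(h) = h^{-1}·((1−τ₀) + Σ_{ℓ'=1}^{L̂−1} 2^{ℓ'}(τ_{ℓ'−1} − τ_{ℓ'}) + 2^{L̂} τ_{L̂−1}) + 2·Σ_{ℓ'=0}^{L̂−1} 2^{ℓ'}. Then there exists a constant C > 0, depending only on τ₀ and η, such that for all h ∈ (0, τ₀]: if η ≠ 1 then W(h) ≤ C·h^{−max(1, 1/η)}, and if η = 1 then W(h) ≤ C·(1 + log₂(1/h))·h^{−1}. -/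
open Real Finset

/-- The branching times `τ_{ℓ'} = τ₀ · 2^{-η ℓ'}`. -/
noncomputable def brTau (τ₀ η : ℝ) (l : ℕ) : ℝ := τ₀ * (2 : ℝ) ^ (-(η * l))

/-- The index `L̂ = ⌊log₂((h/τ₀)⁻¹)/η⌋`. -/
noncomputable def brLhat (τ₀ η h : ℝ) : ℕ := ⌊Real.logb 2 (h / τ₀)⁻¹ / η⌋₊

/-- The work of the branching estimator with step size `h`. -/
noncomputable def brWork (τ₀ η h : ℝ) : ℝ :=
  h⁻¹ * ((1 - τ₀)
      + (∑ l ∈ Finset.Icc 1 (brLhat τ₀ η h - 1),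
          (2 : ℝ) ^ l * (brTau τ₀ η (l - 1) - brTau τ₀ η l))
      + (2 : ℝ) ^ (brLhat τ₀ η h) * brTau τ₀ η (brLhat τ₀ η h - 1))
    + 2 * ∑ l ∈ Finset.range (brLhat τ₀ η h), (2 : ℝ) ^ l

lemma br_L_le (τ₀ η h : ℝ) (h0 : 0 < τ₀) (h1 : τ₀ < 1) (hη : 0 < η) (hh : 0 < h) (hle : h ≤ τ₀) :
    (brLhat τ₀ η h : ℝ) ≤ Real.logb 2 h⁻¹ / η := by
  have hx : 1 ≤ (h / τ₀)⁻¹ := by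
    rw [inv_div, le_div_iff₀ hh]; linarith
  have hnn : 0 ≤ Real.logb 2 (h / τ₀)⁻¹ / η :=
    div_nonneg (Real.logb_nonneg (by norm_num) hx) hη.le
  refine (Nat.floor_le hnn).trans ?_
  refine div_le_div_of_nonneg_right ?_ hη.le
  refine Real.logb_le_logb_of_le (by norm_num) (by positivity) ?_
  rw [inv_div, ← one_div]
  exact div_le_div_of_nonneg_right h1.le hh.le

lemma br_pow_le (τ₀ η h : ℝ) (h0 : 0 < τ₀) (h1 : τ₀ < 1) (hη : 0 < η) (hh : 0 < h) (hle : h ≤ τ₀) :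
    (2 : ℝ) ^ (brLhat τ₀ η h) ≤ h ^ (-η⁻¹) := by
  have h2 := br_L_le τ₀ η h h0 h1 hη hh hle
  calc (2 : ℝ) ^ (brLhat τ₀ η h) = (2 : ℝ) ^ ((brLhat τ₀ η h : ℕ) : ℝ) := (Real.rpow_natCast _ _).symm
    _ ≤ (2 : ℝ) ^ (Real.logb 2 h⁻¹ / η) := Real.rpow_le_rpow_of_exponent_le (by norm_num) h2
    _ = h ^ (-η⁻¹) := by
      rw [div_eq_mul_inv, Real.rpow_mul (by norm_num),
        Real.rpow_logb (by norm_num) (by norm_num) (by positivity),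
        Real.inv_rpow hh.le, Real.rpow_neg hh.le]

lemma br_term (τ₀ η : ℝ) (l : ℕ) :
    (2 : ℝ) ^ (l + 1) * brTau τ₀ η l = τ₀ * (2 : ℝ) ^ η * ((2 : ℝ) ^ (1 - η)) ^ (l + 1) := by
  unfold brTau
  rw [← Real.rpow_natCast, ← Real.rpow_natCast, ← Real.rpow_mul (by norm_num)]
  have e : (2 : ℝ) ^ (((l + 1 : ℕ) : ℝ)) * (τ₀ * 2 ^ (-(η * l)))
      = τ₀ * (2 ^ (((l + 1 : ℕ) : ℝ)) * 2 ^ (-(η * l))) := by ring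
  rw [e, mul_assoc τ₀, ← Real.rpow_add (by norm_num), ← Real.rpow_add (by norm_num)]
  congr 2
  push_cast; ring

lemma br_work_le (τ₀ η h : ℝ) (h0 : 0 < τ₀) (h1 : τ₀ < 1) (hη : 0 < η) (hh : 0 < h) :
    brWork τ₀ η h ≤ h⁻¹ * (2 * (2 : ℝ) ^ η *
      ∑ l ∈ Finset.range (brLhat τ₀ η h + 1), ((2 : ℝ) ^ (1 - η)) ^ l)
      + 2 * (2 : ℝ) ^ (brLhat τ₀ η h) := by
  unfold brWork
  generalize brLhat τ₀ η h = L
  set q : ℝ := (2 : ℝ) ^ η with hq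
  set r : ℝ := (2 : ℝ) ^ (1 - η) with hr
  have hq1 : 1 ≤ q := Real.one_le_rpow (by norm_num) hη.le
  have hr0 : 0 < r := Real.rpow_pos_of_pos (by norm_num) _
  have hgeom : 2 * ∑ l ∈ Finset.range L, (2 : ℝ) ^ l ≤ 2 * (2 : ℝ) ^ L := by
    rw [geom_sum_eq (by norm_num)]
    linarith
  have hb : ∀ l : ℕ, (2 : ℝ) ^ (l + 1) * brTau τ₀ η l ≤ q * r ^ (l + 1) := by
    intro l
    rw [br_term]
    have : 0 ≤ q * r ^ (l + 1) := by positivity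
    nlinarith
  have hS : 1 ≤ ∑ l ∈ Finset.range (L + 1), r ^ l := by
    rw [Finset.sum_range_succ']
    have : 0 ≤ ∑ l ∈ Finset.range L, r ^ (l + 1) := Finset.sum_nonneg fun _ _ => by positivity
    simpa using this
  have key : (∑ l ∈ Finset.Icc 1 (L - 1), (2 : ℝ) ^ l * (brTau τ₀ η (l - 1) - brTau τ₀ η l))
      + (2 : ℝ) ^ L * brTau τ₀ η (L - 1) ≤ q * ∑ l ∈ Finset.range (L + 1), r ^ l := by
    rcases L with _ | n
    · simp [brTau]; linarith
    · have s1 : (∑ l ∈ Finset.Icc 1 n, (2 : ℝ) ^ l * (brTau τ₀ η (l - 1) - brTau τ₀ η l))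
          ≤ ∑ l ∈ Finset.range (n + 1), q * r ^ l := by
        refine (Finset.sum_le_sum (g := fun l => q * r ^ l) ?_).trans
          (Finset.sum_le_sum_of_subset_of_nonneg ?_ ?_)
        · intro l hl
          rw [Finset.mem_Icc] at hl
          obtain ⟨m, rfl⟩ : ∃ m, l = m + 1 := ⟨l - 1, by omega⟩
          have h3 := hb m
          have h4 : 0 ≤ (2 : ℝ) ^ (m + 1) * brTau τ₀ η (m + 1) := by
            unfold brTau; positivity
          simp only [Nat.add_sub_cancel]
          rw [mul_sub]; linarith
        · intro l hl
          rw [Finset.mem_Icc] at hl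
          rw [Finset.mem_range]; omega
        · intros; positivity
      rw [Finset.sum_range_succ, mul_add, Finset.mul_sum]
      simp only [Nat.add_sub_cancel]
      linarith [hb n]
  refine add_le_add (mul_le_mul_of_nonneg_left ?_ (by positivity)) hgeom
  have : 1 ≤ q * ∑ l ∈ Finset.range (L + 1), r ^ l := by nlinarith
  linarith

/-- work bound of Theorem 2.3. -/
theorem branching_work_bound (τ₀ η : ℝ) (hτ₀ : τ₀ ∈ Set.Ioo (0 : ℝ) 1) (hη : 0 < η) :
    ∃ C > (0 : ℝ), ∀ h : ℝ, h ∈ Set.Ioc (0 : ℝ) τ₀ →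
      (η ≠ 1 → brWork τ₀ η h ≤ C * h ^ (-(max 1 η⁻¹))) ∧
      (η = 1 → brWork τ₀ η h ≤ C * (1 + Real.logb 2 h⁻¹) * h⁻¹) := by
  obtain ⟨h0, h1⟩ := hτ₀
  have hr0 : 0 < (2 : ℝ) ^ (1 - η) := Real.rpow_pos_of_pos (by norm_num) _
  have hq0 : 0 < (2 : ℝ) ^ η := Real.rpow_pos_of_pos (by norm_num) _
  rcases lt_trichotomy η 1 with hlt | heq | hgt
  · have hr1 : 1 < (2 : ℝ) ^ (1 - η) := Real.one_lt_rpow (by norm_num) (by linarith)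
    have hr1' : 0 < (2 : ℝ) ^ (1 - η) - 1 := by linarith
    refine ⟨2 * (2 : ℝ) ^ η * ((2 : ℝ) ^ (1 - η) / ((2 : ℝ) ^ (1 - η) - 1)) + 2, by positivity, ?_⟩
    rintro h ⟨hh, hle⟩
    refine ⟨fun _ => ?_, fun h => absurd h hlt.ne⟩
    have hW := br_work_le τ₀ η h h0 h1 hη hh
    have hP := br_pow_le τ₀ η h h0 h1 hη hh hle
    have hi : 1 ≤ η⁻¹ := (one_le_inv₀ hη).2 hlt.le
    rw [max_eq_right hi]
    generalize brLhat τ₀ η h = L at *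
    have hrL : h⁻¹ * ((2 : ℝ) ^ (1 - η)) ^ L ≤ h ^ (-η⁻¹) := by
      have e1 : ((2 : ℝ) ^ (1 - η)) ^ L = ((2 : ℝ) ^ L) ^ (1 - η) := by
        rw [← Real.rpow_natCast, ← Real.rpow_natCast, ← Real.rpow_mul (by norm_num),
          ← Real.rpow_mul (by norm_num), mul_comm]
      have e2 : ((2 : ℝ) ^ L) ^ (1 - η) ≤ (h ^ (-η⁻¹)) ^ (1 - η) :=
        Real.rpow_le_rpow (by positivity) hP (by linarith)
      rw [e1]
      calc h⁻¹ * ((2 : ℝ) ^ L) ^ (1 - η) ≤ h⁻¹ * (h ^ (-η⁻¹)) ^ (1 - η) :=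
            mul_le_mul_of_nonneg_left e2 (by positivity)
        _ = h ^ (-η⁻¹) := by
          rw [← Real.rpow_mul hh.le, ← Real.rpow_neg_one, ← Real.rpow_add hh]
          congr 1
          field_simp
          ring
    have hS : ∑ l ∈ Finset.range (L + 1), ((2 : ℝ) ^ (1 - η)) ^ l
        ≤ ((2 : ℝ) ^ (1 - η) / ((2 : ℝ) ^ (1 - η) - 1)) * ((2 : ℝ) ^ (1 - η)) ^ L := by
      rw [geom_sum_eq hr1.ne', div_mul_eq_mul_div]
      refine div_le_div_of_nonneg_right ?_ hr1'.le
      rw [pow_succ']; linarith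
    calc brWork τ₀ η h ≤ _ := hW
      _ ≤ h⁻¹ * (2 * (2 : ℝ) ^ η * (((2 : ℝ) ^ (1 - η) / ((2 : ℝ) ^ (1 - η) - 1))
            * ((2 : ℝ) ^ (1 - η)) ^ L)) + 2 * (2 : ℝ) ^ L := by gcongr
      _ = (2 * (2 : ℝ) ^ η * ((2 : ℝ) ^ (1 - η) / ((2 : ℝ) ^ (1 - η) - 1)))
            * (h⁻¹ * ((2 : ℝ) ^ (1 - η)) ^ L) + 2 * (2 : ℝ) ^ L := by ring
      _ ≤ (2 * (2 : ℝ) ^ η * ((2 : ℝ) ^ (1 - η) / ((2 : ℝ) ^ (1 - η) - 1)))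
            * h ^ (-η⁻¹) + 2 * h ^ (-η⁻¹) := by gcongr
      _ = _ := by ring
  · subst heq
    refine ⟨6, by norm_num, ?_⟩
    rintro h ⟨hh, hle⟩
    refine ⟨fun h => absurd rfl h, fun _ => ?_⟩
    have hW := br_work_le τ₀ 1 h h0 h1 hη hh
    have hP := br_pow_le τ₀ 1 h h0 h1 hη hh hle
    have hL := br_L_le τ₀ 1 h h0 h1 hη hh hle
    generalize brLhat τ₀ 1 h = L at *
    rw [inv_one, Real.rpow_neg_one] at hP
    simp only [sub_self, Real.rpow_zero, one_pow, Real.rpow_one, Finset.sum_const,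
      Finset.card_range, nsmul_eq_mul, mul_one, div_one] at hW hL
    push_cast at hW
    have hi : 0 < h⁻¹ := by positivity
    have hl0 : 0 ≤ Real.logb 2 h⁻¹ := le_trans (Nat.cast_nonneg L) hL
    nlinarith [mul_le_mul_of_nonneg_left hL hi.le, mul_nonneg hl0 hi.le]
  · have hr1 : (2 : ℝ) ^ (1 - η) < 1 := Real.rpow_lt_one_of_one_lt_of_neg (by norm_num) (by linarith)
    have hr1' : 0 < 1 - (2 : ℝ) ^ (1 - η) := by linarith
    refine ⟨2 * (2 : ℝ) ^ η * (1 - (2 : ℝ) ^ (1 - η))⁻¹ + 2, by positivity, ?_⟩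
    rintro h ⟨hh, hle⟩
    refine ⟨fun _ => ?_, fun h => absurd h hgt.ne'⟩
    have hW := br_work_le τ₀ η h h0 h1 hη hh
    have hP := br_pow_le τ₀ η h h0 h1 hη hh hle
    have hi : η⁻¹ ≤ 1 := inv_le_one_of_one_le₀ hgt.le
    rw [max_eq_left hi, Real.rpow_neg_one]
    have hP2 : h ^ (-η⁻¹) ≤ h⁻¹ := by
      rw [← Real.rpow_neg_one h]
      exact Real.rpow_le_rpow_of_exponent_ge hh (by linarith) (by linarith)
    generalize brLhat τ₀ η h = L at *
    have hS : ∑ l ∈ Finset.range (L + 1), ((2 : ℝ) ^ (1 - η)) ^ l ≤ (1 - (2 : ℝ) ^ (1 - η))⁻¹ := by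
      rw [← tsum_geometric_of_lt_one hr0.le hr1]
      exact (summable_geometric_of_lt_one hr0.le hr1).sum_le_tsum _ (fun _ _ => by positivity)
    calc brWork τ₀ η h ≤ _ := hW
      _ ≤ h⁻¹ * (2 * (2 : ℝ) ^ η * (1 - (2 : ℝ) ^ (1 - η))⁻¹) + 2 * h⁻¹ := by
          gcongr
          exact hP.trans hP2
      _ = _ := by ring
end

section
/- Let I be a finite linearly ordered set of cardinality Q ≥ 4, let f : I × I → [0,∞) be symmetric (f(i,j) = f(j,i)), and suppose there is A ≥ 0 such that Σ_{j ∈ I, j ≠ i} f(i,j) ≤ A for every i ∈ I. Then Σ_{i < j < k < m} f(i,j)·f(j,k)·f(k,m) ≤ Q·A³. -/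
open Finset

/-- the combinatorial estimate underlying the fourth-moment (kurtosis) bound of the
Appendix: the sum over increasing quadruples of products of pairwise weights is at most `Q·A³`. -/
theorem quadruple_sum_bound
    (I : Type*) [Fintype I] [LinearOrder I] (hQ : 4 ≤ Fintype.card I)
    (f : I → I → ℝ) (hf0 : ∀ i j, 0 ≤ f i j) (hsymm : ∀ i j, f i j = f j i)
    (A : ℝ) (hA : 0 ≤ A) (hrow : ∀ i, ∑ j ∈ Finset.univ.filter (fun j => j ≠ i), f i j ≤ A) :
    (∑ i : I, ∑ j ∈ Finset.univ.filter (fun j => i < j),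
      ∑ k ∈ Finset.univ.filter (fun k => j < k),
      ∑ m ∈ Finset.univ.filter (fun m => k < m),
        f i j * f j k * f k m)
      ≤ (Fintype.card I : ℝ) * A ^ 3 := by
  have key : ∀ i, ∑ j ∈ Finset.univ.filter (fun j => i < j), f i j ≤ A := by
    intro i
    refine le_trans (Finset.sum_le_sum_of_subset_of_nonneg ?_ ?_) (hrow i)
    · intro j hj
      simp only [Finset.mem_filter, Finset.mem_univ, true_and] at hj ⊢
      exact ne_of_gt hj
    · intro j _ _
      exact hf0 i j
  have step : ∀ (i : I) (c B : ℝ) (g : I → ℝ), 0 ≤ c → 0 ≤ B →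
      (∀ j, g j ≤ c * f i j * B) →
      ∑ j ∈ Finset.univ.filter (fun j => i < j), g j ≤ c * (A * B) := by
    intro i c B g hc hB hg
    calc ∑ j ∈ Finset.univ.filter (fun j => i < j), g j
        ≤ ∑ j ∈ Finset.univ.filter (fun j => i < j), c * f i j * B :=
          Finset.sum_le_sum (fun j _ => hg j)
      _ = c * ((∑ j ∈ Finset.univ.filter (fun j => i < j), f i j) * B) := by
          rw [Finset.sum_mul, Finset.mul_sum]
          exact Finset.sum_congr rfl (fun j _ => by ring)
      _ ≤ c * (A * B) := by
          have := key i
          gcongr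
  have main : ∀ i : I, (∑ j ∈ Finset.univ.filter (fun j => i < j),
      ∑ k ∈ Finset.univ.filter (fun k => j < k),
      ∑ m ∈ Finset.univ.filter (fun m => k < m),
        f i j * f j k * f k m) ≤ A ^ 3 := by
    intro i
    have h := step i 1 (A * (A * 1)) (fun j =>
      ∑ k ∈ Finset.univ.filter (fun k => j < k),
      ∑ m ∈ Finset.univ.filter (fun m => k < m),
        f i j * f j k * f k m) zero_le_one (by positivity) (fun j => by
      rw [one_mul]
      exact step j (f i j) (A * 1) (fun k =>
        ∑ m ∈ Finset.univ.filter (fun m => k < m),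
          f i j * f j k * f k m) (hf0 i j) (by positivity) (fun k =>
        step k (f i j * f j k) 1 (fun m => f i j * f j k * f k m)
          (mul_nonneg (hf0 i j) (hf0 j k)) zero_le_one (fun m => by rw [mul_one])))
    refine h.trans (le_of_eq (by ring))
  calc _ ≤ ∑ _i : I, A ^ 3 := Finset.sum_le_sum (fun i _ => main i)
    _ = _ := by simp
end
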